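/- Let A generate an α-times resolvent family {S_α(t)}_{t≥0} on X, where 1 < α < 2, let r > 0, let f : [0,r] → X be continuous and x, y ∈ X. If u ∈ C([0,r];X) is a mild solution of D_t^α u = Au + f, u(0) = x, u'(0) = y (i.e. (g_α*u)(t) ∈ D(A) and u(t) − x − ty = A((g_α*u)(t)) + (g_α*f)(t) for all t ∈ [0,r]), then u(t) = S_α(t)x + ∫_0^t S_α(s)y ds + (P_α*f)(t) for all t ∈ [0,r]. -/

import Mathlib

open MeasureTheory Set

/-- `g β t = t^(β-1)/Γ(β)`. -/
noncomputable def g (β t : ℝ) : ℝ := t ^ (β - 1) / Real.Gamma β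

/-- `Pa α S t x = (g_{α-1} * S)(t) x = ∫_0^t g_{α-1}(t-s) S(s) x ds`. -/
noncomputable def Pa {X : Type*} [NormedAddCommGroup X] [NormedSpace ℂ X]
    (α : ℝ) (S : ℝ → X →L[ℂ] X) (t : ℝ) (x : X) : X :=
  ∫ s in (0:ℝ)..t, g (α - 1) (t - s) • S s x


theorem aux_triangle {X : Type*} [NormedAddCommGroup X] [NormedSpace ℝ X]
    (k : ℝ → ℝ) (hk : ∀ a b, IntervalIntegrable k volume a b)
    (Ψ : ℝ → ℝ → X) (hΨ : Continuous (Function.uncurry Ψ)) (t : ℝ) (ht : 0 ≤ t) :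
    ∫ s in (0:ℝ)..t, ∫ ρ in (0:ℝ)..s, k ρ • Ψ s ρ
      = ∫ ρ in (0:ℝ)..t, k ρ • ∫ s in ρ..t, Ψ s ρ := by
  have h1 : ∀ s ∈ Ioc (0:ℝ) t, ∫ ρ in (0:ℝ)..s, k ρ • Ψ s ρ
      = ∫ ρ in Ioc (0:ℝ) t, ({p : ℝ × ℝ | p.2 ≤ p.1}).indicator
          (fun p : ℝ × ℝ => k p.2 • Ψ p.1 p.2) (s, ρ) := by
    intro s hs
    rw [intervalIntegral.integral_of_le hs.1.le]
    have : (fun ρ => ({p : ℝ × ℝ | p.2 ≤ p.1}).indicator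
          (fun p : ℝ × ℝ => k p.2 • Ψ p.1 p.2) (s, ρ))
        = (Iic s).indicator (fun ρ => k ρ • Ψ s ρ) := by
      ext ρ; simp [indicator]
    rw [this, setIntegral_indicator measurableSet_Iic, Ioc_inter_Iic, min_eq_right hs.2]
  have h2 : ∀ ρ ∈ Ioc (0:ℝ) t, k ρ • ∫ s in ρ..t, Ψ s ρ
      = ∫ s in Ioc (0:ℝ) t, ({p : ℝ × ℝ | p.2 ≤ p.1}).indicator
          (fun p : ℝ × ℝ => k p.2 • Ψ p.1 p.2) (s, ρ) := by
    intro ρ hs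
    rw [intervalIntegral.integral_of_le hs.2, ← integral_smul]
    have : (fun s => ({p : ℝ × ℝ | p.2 ≤ p.1}).indicator
          (fun p : ℝ × ℝ => k p.2 • Ψ p.1 p.2) (s, ρ))
        = (Ici ρ).indicator (fun s => k ρ • Ψ s ρ) := by
      ext s; simp [indicator]
    rw [this, setIntegral_indicator measurableSet_Ici]
    have h3 : Ioc 0 t ∩ Ici ρ = Icc ρ t := by
      ext z; simp only [mem_inter_iff, mem_Ioc, mem_Ici, mem_Icc]
      constructor
      · rintro ⟨⟨_, h⟩, h'⟩; exact ⟨h', h⟩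
      · rintro ⟨h, h'⟩; exact ⟨⟨hs.1.trans_le h, h'⟩, h⟩
    rw [h3, integral_Icc_eq_integral_Ioc]
  rw [intervalIntegral.integral_of_le ht, intervalIntegral.integral_of_le ht,
    setIntegral_congr_fun measurableSet_Ioc h1, setIntegral_congr_fun measurableSet_Ioc h2]
  refine integral_integral_swap
    (f := fun s ρ => ({p : ℝ × ℝ | p.2 ≤ p.1}).indicator
          (fun p : ℝ × ℝ => k p.2 • Ψ p.1 p.2) (s, ρ)) ?_
  refine Integrable.indicator ?_ (measurableSet_le measurable_snd measurable_fst)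
  have hkI : Integrable (fun p : ℝ × ℝ => k p.2)
      ((volume.restrict (Ioc 0 t)).prod (volume.restrict (Ioc 0 t))) := by
    have := (hk 0 t).1
    exact Integrable.comp_snd this _
  obtain ⟨C, hC⟩ := (isCompact_Icc.prod isCompact_Icc : IsCompact (Icc 0 t ×ˢ Icc 0 t)).exists_bound_of_continuousOn
    hΨ.continuousOn
  refine hkI.smul_bdd C hΨ.aestronglyMeasurable ?_
  rw [Measure.prod_restrict]
  refine (ae_restrict_iff' (measurableSet_Ioc.prod measurableSet_Ioc)).2 (Filter.Eventually.of_forall ?_)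
  rintro ⟨a, b⟩ ⟨h1, h2⟩
  exact hC (a, b) ⟨Ioc_subset_Icc_self h1, Ioc_subset_Icc_self h2⟩

/-- order form B -/
theorem aux_B {X : Type*} [NormedAddCommGroup X] [NormedSpace ℝ X]
    (k : ℝ → ℝ) (hk : ∀ a b, IntervalIntegrable k volume a b)
    (Φ : ℝ → ℝ → X) (hΦ : Continuous (Function.uncurry Φ)) (t : ℝ) (ht : 0 ≤ t) :
    ∫ s in (0:ℝ)..t, ∫ τ in (0:ℝ)..s, k (s - τ) • Φ (t - s) τ
      = ∫ s in (0:ℝ)..t, k (t - s) • ∫ τ in (0:ℝ)..s, Φ (s - τ) τ := by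
  have h1 : ∀ s, ∫ τ in (0:ℝ)..s, k (s - τ) • Φ (t - s) τ
      = ∫ ρ in (0:ℝ)..s, k ρ • Φ (t - s) (s - ρ) := by
    intro s
    have := intervalIntegral.integral_comp_sub_left (a := 0) (b := s)
      (fun ρ => k ρ • Φ (t - s) (s - ρ)) s
    simpa using this
  simp_rw [h1]
  rw [aux_triangle k hk (fun s ρ => Φ (t - s) (s - ρ)) ?_ t ht]
  · have h2 : ∀ ρ, ∫ s in ρ..t, Φ (t - s) (s - ρ)
        = ∫ τ in (0:ℝ)..(t - ρ), Φ (t - ρ - τ) τ := by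
      intro ρ
      have := intervalIntegral.integral_comp_sub_right (a := ρ) (b := t)
        (fun τ => Φ (t - ρ - τ) τ) ρ
      simpa using this
    simp_rw [h2]
    have := intervalIntegral.integral_comp_sub_left (a := 0) (b := t)
      (fun ρ => k ρ • ∫ τ in (0:ℝ)..(t - ρ), Φ (t - ρ - τ) τ) t
    simpa using this.symm
  · exact hΦ.comp (by fun_prop : Continuous fun p : ℝ × ℝ => (t - p.1, p.1 - p.2))

theorem aux_A {X : Type*} [NormedAddCommGroup X] [NormedSpace ℝ X]
    (k : ℝ → ℝ) (hk : ∀ a b, IntervalIntegrable k volume a b)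
    (Φ : ℝ → ℝ → X) (hΦ : Continuous (Function.uncurry Φ)) (t : ℝ) (ht : 0 ≤ t) :
    ∫ s in (0:ℝ)..t, ∫ τ in (0:ℝ)..(t - s), k (t - s - τ) • Φ τ s
      = ∫ s in (0:ℝ)..t, k (t - s) • ∫ τ in (0:ℝ)..s, Φ (s - τ) τ := by
  have h := aux_B k hk (fun a b => Φ b a) (hΦ.comp continuous_swap) t ht
  have e1 := intervalIntegral.integral_comp_sub_left (a := 0) (b := t)
      (fun s => ∫ τ in (0:ℝ)..(t - s), k (t - s - τ) • Φ τ s) t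
  simp only [sub_sub_cancel, sub_self, sub_zero] at e1
  rw [← e1, h]
  congr 1
  ext s
  congr 1
  have := intervalIntegral.integral_comp_sub_left (a := 0) (b := s)
      (fun τ => Φ (s - τ) τ) s
  simpa using this

theorem aux_zero {X : Type*} [NormedAddCommGroup X] [NormedSpace ℝ X] [CompleteSpace X]
    (r : ℝ) (hr : 0 < r) (F : ℝ → X) (hF : ContinuousOn F (Icc 0 r))
    (h : ∀ t ∈ Icc (0:ℝ) r, ∫ s in (0:ℝ)..t, F s = 0) : ∀ t ∈ Icc (0:ℝ) r, F t = 0 := by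
  have h1 : EqOn F (fun _ => 0) (Ioo 0 r) := by
    intro t ht
    have hn : Icc 0 r ∈ nhds t := Icc_mem_nhds ht.1 ht.2
    have hd := intervalIntegral.integral_hasDerivAt_right (a := 0) (b := t) (f := F)
      ((hF.mono (by rw [uIcc_of_le ht.1.le]; exact Icc_subset_Icc_right ht.2.le)).intervalIntegrable)
      (hF.stronglyMeasurableAtFilter_nhdsWithin measurableSet_Icc t |>.filter_mono (by
        rw [nhdsWithin_eq_nhds.2 hn])) (hF.continuousAt hn)
    have hz : HasDerivAt (fun t => ∫ s in (0:ℝ)..t, F s) 0 t := by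
      refine (hasDerivAt_const t (0:X)).congr_of_eventuallyEq ?_
      filter_upwards [hn] with z hz using h z hz
    exact hd.unique hz
  have h2 := h1.of_subset_closure hF continuousOn_const Ioo_subset_Icc_self
    (by rw [closure_Ioo hr.ne])
  exact h2

theorem aux_joint {X : Type*} [NormedAddCommGroup X] [NormedSpace ℂ X] [CompleteSpace X]
    (S : ℝ → X →L[ℂ] X) (hS : ∀ x, Continuous fun t => S t x) :
    Continuous (fun p : ℝ × X => S p.1 p.2) := by
  rw [continuous_iff_continuousAt]
  rintro ⟨b, z⟩
  obtain ⟨C, hC⟩ : ∃ C, ∀ i : Icc (b - 1) (b + 1), ‖S i‖ ≤ C := by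
    apply banach_steinhaus
    intro x
    obtain ⟨C, hC⟩ := (isCompact_Icc : IsCompact (Icc (b-1) (b+1))).exists_bound_of_continuousOn
      (hS x).continuousOn
    exact ⟨C, fun i => hC i i.2⟩
  rw [ContinuousAt, tendsto_iff_norm_sub_tendsto_zero]
  have hb : Filter.Tendsto (fun p : ℝ × X => C * ‖p.2 - z‖ + ‖S p.1 z - S b z‖) (nhds (b, z)) (nhds 0) := by
    have : Continuous (fun p : ℝ × X => C * ‖p.2 - z‖ + ‖S p.1 z - S b z‖) := by
      have := (hS z).comp (continuous_fst : Continuous (Prod.fst : ℝ × X → ℝ))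
      simp only [Function.comp_def] at this
      fun_prop
    simpa using this.tendsto (b, z)
  refine squeeze_zero' (Filter.Eventually.of_forall fun _ => norm_nonneg _) ?_ hb
  have hn : ∀ᶠ p : ℝ × X in nhds (b, z), p.1 ∈ Icc (b-1) (b+1) :=
    continuousAt_fst.eventually (Icc_mem_nhds (by simp) (by simp))
  filter_upwards [hn] with p hp
  have : S p.1 p.2 - S b z = S p.1 (p.2 - z) + (S p.1 z - S b z) := by
    rw [map_sub]; abel
  rw [this]
  refine (norm_add_le _ _).trans ?_
  gcongr
  exact (S p.1).le_of_opNorm_le (hC ⟨p.1, hp⟩) _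

theorem g_int (β : ℝ) (hβ : 0 < β) (a b : ℝ) : IntervalIntegrable (g β) volume a b := by
  unfold g
  exact (intervalIntegral.intervalIntegrable_rpow' (by linarith)).div_const _

theorem g_cont (β : ℝ) (hβ : 1 ≤ β) : Continuous (g β) := by
  unfold g
  exact (Real.continuous_rpow_const (by linarith)).div_const _

/-- beta -/
theorem g_beta (α : ℝ) (h1 : 1 < α) (h2 : α < 2) (t : ℝ) (ht : 0 ≤ t) :
    ∫ s in (0:ℝ)..t, g (2 - α) (t - s) * g α s = t := by
  rcases ht.eq_or_lt with rfl | ht'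
  · simp
  have hb := Complex.betaIntegral_scaled (α : ℂ) ((2 - α : ℝ) : ℂ) ht'
  rw [Complex.betaIntegral_eq_Gamma_mul_div _ _ (by simp; linarith) (by
    rw [Complex.ofReal_re]; linarith)] at hb
  have hl : ∫ x in (0:ℝ)..t, (x : ℂ) ^ ((α : ℂ) - 1) * ((t : ℂ) - x) ^ (((2 - α : ℝ) : ℂ) - 1)
      = ((∫ x in (0:ℝ)..t, x ^ (α - 1) * (t - x) ^ (2 - α - 1) : ℝ) : ℂ) := by
    rw [← intervalIntegral.integral_ofReal]
    refine intervalIntegral.integral_congr fun x hx => ?_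
    rw [uIcc_of_le ht] at hx
    rw [Complex.ofReal_mul, Complex.ofReal_cpow hx.1, Complex.ofReal_cpow (sub_nonneg.2 hx.2)]
    push_cast
    rfl
  rw [hl] at hb
  have hs : (α : ℂ) + ((2 - α : ℝ) : ℂ) = 2 := by push_cast; ring
  rw [hs] at hb
  have h2' : (2 : ℂ) - 1 = 1 := by norm_num
  rw [h2', Complex.cpow_one, Complex.Gamma_ofReal, Complex.Gamma_ofReal] at hb
  have hG2 : Complex.Gamma 2 = 1 := by simp
  rw [hG2, div_one] at hb
  have hb' : (∫ x in (0:ℝ)..t, x ^ (α - 1) * (t - x) ^ (2 - α - 1))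
     = t * (Real.Gamma α * Real.Gamma (2 - α)) := by exact_mod_cast hb
  have hp1 := Real.Gamma_pos_of_pos (show 0 < α by linarith)
  have hp2 := Real.Gamma_pos_of_pos (show 0 < 2 - α by linarith)
  have : ∀ s, g (2 - α) (t - s) * g α s
      = (Real.Gamma α * Real.Gamma (2 - α))⁻¹ * (s ^ (α - 1) * (t - s) ^ (2 - α - 1)) := by
    intro s; unfold g; field_simp
  simp_rw [this]
  rw [intervalIntegral.integral_const_mul, hb']
  field_simp

theorem g_prim (α : ℝ) (h1 : 1 < α) (t : ℝ) :
    ∫ s in (0:ℝ)..t, g (α - 1) (t - s) = g α t := by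
  have := intervalIntegral.integral_comp_sub_left (a := 0) (b := t) (fun s => g (α - 1) s) t
  simp only [sub_self, sub_zero] at this
  rw [this]
  unfold g
  rw [intervalIntegral.integral_div, integral_rpow (Or.inl (by linarith))]
  have h0 : (α - 1 : ℝ) ≠ 0 := by linarith
  have hG : Real.Gamma α = (α - 1) * Real.Gamma (α - 1) := by
    have := Real.Gamma_add_one h0
    simpa using this
  rw [hG]
  rw [show α - 1 - 1 + 1 = α - 1 by ring, Real.zero_rpow h0, sub_zero, div_div]

theorem aux_kint {X : Type*} [NormedAddCommGroup X] [NormedSpace ℝ X]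
    (k : ℝ → ℝ) (hk : ∀ a b, IntervalIntegrable k volume a b)
    (h : ℝ → X) (hh : Continuous h) (s a b : ℝ) :
    IntervalIntegrable (fun τ => k (s - τ) • h τ) volume a b := by
  have h1 : IntervalIntegrable (fun τ => k (s - τ)) volume a b := by
    have := (hk (s - a) (s - b)).comp_sub_left s
    simpa using this
  exact h1.smul_continuousOn hh.continuousOn

theorem aux_SC {X : Type*} [NormedAddCommGroup X] [NormedSpace ℂ X] [CompleteSpace X]
    (S : ℝ → X →L[ℂ] X) (hS : ∀ x, Continuous fun t => S t x)
    (k : ℝ → ℝ) (hk : ∀ a b, IntervalIntegrable k volume a b)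
    (h : ℝ → X) (hh : Continuous h) (t : ℝ) (ht : 0 ≤ t) :
    ∫ s in (0:ℝ)..t, S (t - s) (∫ τ in (0:ℝ)..s, k (s - τ) • h τ)
      = ∫ s in (0:ℝ)..t, k (t - s) • ∫ τ in (0:ℝ)..s, S (s - τ) (h τ) := by
  have hΦ : Continuous (Function.uncurry fun a b => S a (h b)) :=
    (aux_joint S hS).comp (by fun_prop : Continuous fun p : ℝ × ℝ => (p.1, h p.2))
  rw [← aux_B k hk (fun a b => S a (h b)) hΦ t ht]
  congr 1
  ext s
  rw [← ContinuousLinearMap.intervalIntegral_comp_comm (S (t - s)) (aux_kint k hk h hh s 0 s)]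
  congr 1
  ext τ
  exact ContinuousLinearMap.map_smul_of_tower _ _ _

/-- 1 * (k * h) in two ways. -/
theorem aux_one {X : Type*} [NormedAddCommGroup X] [NormedSpace ℝ X] [CompleteSpace X]
    (k : ℝ → ℝ) (hk : ∀ a b, IntervalIntegrable k volume a b)
    (h : ℝ → X) (hh : Continuous h) (t : ℝ) (ht : 0 ≤ t) :
    ∫ s in (0:ℝ)..t, (∫ τ in (0:ℝ)..s, k (s - τ) • h τ)
      = ∫ s in (0:ℝ)..t, k (t - s) • ∫ τ in (0:ℝ)..s, h τ :=
  aux_B k hk (fun _ b => h b) (hh.comp continuous_snd) t ht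

theorem aux_assoc {X : Type*} [NormedAddCommGroup X] [NormedSpace ℝ X] [CompleteSpace X]
    (k l : ℝ → ℝ) (hk : ∀ a b, IntervalIntegrable k volume a b) (hl : Continuous l)
    (h : ℝ → X) (hh : Continuous h) (t : ℝ) (ht : 0 ≤ t) :
    ∫ s in (0:ℝ)..t, k (t - s) • ∫ τ in (0:ℝ)..s, l (s - τ) • h τ
      = ∫ s in (0:ℝ)..t, (∫ τ in (0:ℝ)..(t - s), k (t - s - τ) * l τ) • h s := by
  rw [← aux_A k hk (fun a b => l a • h b) (by
    exact (hl.comp continuous_fst).smul (hh.comp continuous_snd)) t ht]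
  congr 1
  ext s
  rw [← intervalIntegral.integral_smul_const]
  simp_rw [smul_smul]

theorem aux_galpha {X : Type*} [NormedAddCommGroup X] [NormedSpace ℝ X] [CompleteSpace X]
    (α : ℝ) (h1 : 1 < α) (h : ℝ → X) (hh : Continuous h) (t : ℝ) (ht : 0 ≤ t) :
    ∫ s in (0:ℝ)..t, g α (t - s) • h s
      = ∫ s in (0:ℝ)..t, (∫ τ in (0:ℝ)..s, g (α - 1) (s - τ) • h τ) := by
  have hk := g_int (α - 1) (by linarith)
  have := aux_assoc (g (α - 1)) (fun _ => 1) hk continuous_const h hh t ht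
  simp only [one_smul, mul_one, g_prim α h1] at this
  rw [aux_one _ hk h hh t ht, this]

theorem aux_cancel {X : Type*} [NormedAddCommGroup X] [NormedSpace ℝ X] [CompleteSpace X]
    (α : ℝ) (h1 : 1 < α) (h2 : α < 2) (r : ℝ) (hr : 0 < r) (h : ℝ → X) (hh : Continuous h)
    (hz : ∀ t ∈ Icc (0:ℝ) r, ∫ s in (0:ℝ)..t, g α (t - s) • h s = 0) :
    ∀ t ∈ Icc (0:ℝ) r, h t = 0 := by
  have hk := g_int (2 - α) (by linarith)
  have hone : ∀ a b, IntervalIntegrable (fun _ : ℝ => (1:ℝ)) volume a b :=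
    fun a b => continuous_const.intervalIntegrable a b
  apply aux_zero r hr h hh.continuousOn
  apply aux_zero r hr _ (intervalIntegral.continuous_primitive
    (fun a b => hh.intervalIntegrable a b) 0).continuousOn
  intro t ht
  have e1 := aux_assoc (g (2 - α)) (g α) hk (g_cont α h1.le) h hh t ht.1
  have e2 := aux_assoc (fun _ => 1) (fun _ => 1) hone continuous_const h hh t ht.1
  simp only [one_smul, mul_one] at e2
  rw [e2]
  have e3 : ∫ s in (0:ℝ)..t, g (2 - α) (t - s) • ∫ τ in (0:ℝ)..s, g α (s - τ) • h τ = 0 := by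
    rw [intervalIntegral.integral_congr (g := fun _ => (0:X))]
    · simp
    · intro s hs
      rw [uIcc_of_le ht.1] at hs
      simp [hz s ⟨hs.1, hs.2.trans ht.2⟩]
  rw [← e3, e1]
  refine intervalIntegral.integral_congr fun s hs => ?_
  rw [uIcc_of_le ht.1] at hs
  rw [g_beta α h1 h2 _ (sub_nonneg.2 hs.2)]
  simp

theorem aux_contOn {X : Type*} [NormedAddCommGroup X] [NormedSpace ℝ X] [CompleteSpace X]
    (k : ℝ → ℝ) (hk : ∀ a b, IntervalIntegrable k volume a b)
    (h : ℝ → X) (hh : Continuous h) (h0 : h 0 = 0) (r : ℝ) (hr : 0 < r) :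
    ContinuousOn (fun t => ∫ s in (0:ℝ)..t, k (t - s) • h s) (Icc 0 r) := by
  obtain ⟨C, hC⟩ := (isCompact_Icc : IsCompact (Icc 0 r)).exists_bound_of_continuousOn
    hh.continuousOn
  set c : ℝ → ℝ := fun z => max 0 (min r z) with hc
  have hcc : Continuous c := by fun_prop
  have hcm : ∀ z, c z ∈ Icc 0 r := fun z => ⟨le_max_left _ _, max_le hr.le (min_le_left _ _)⟩
  have hcont : Continuous (fun t => ∫ ρ in (0:ℝ)..r, k ρ • h (c (t - ρ))) := by
    refine intervalIntegral.continuous_of_dominated_interval (bound := fun ρ => ‖k ρ‖ * C) ?_ ?_ ?_ ?_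
    · intro t
      refine AEStronglyMeasurable.smul ?_ ?_
      · exact (intervalIntegrable_iff.1 (hk 0 r)).aestronglyMeasurable
      · exact (by fun_prop : Continuous fun ρ => h (c (t - ρ))).aestronglyMeasurable
    · intro t
      refine Filter.Eventually.of_forall fun ρ _ => ?_
      rw [norm_smul]
      gcongr
      exact hC _ (hcm _)
    · exact (hk 0 r).norm.mul_const C
    · exact Filter.Eventually.of_forall fun ρ _ => by fun_prop
  refine hcont.continuousOn.congr fun t ht => ?_
  have e1 := intervalIntegral.integral_comp_sub_left (a := 0) (b := t)
    (fun ρ => k ρ • h (t - ρ)) t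
  simp only [sub_sub_cancel, sub_self, sub_zero] at e1
  simp only
  have hi : ∀ a b, IntervalIntegrable (fun ρ => k ρ • h (c (t - ρ))) volume a b := fun a b =>
    (hk a b).smul_continuousOn (by fun_prop : Continuous fun ρ => h (c (t - ρ))).continuousOn
  rw [e1, ← intervalIntegral.integral_add_adjacent_intervals (hi 0 t) (hi t r)]
  have e2 : ∫ ρ in t..r, k ρ • h (c (t - ρ)) = 0 := by
    rw [intervalIntegral.integral_congr (g := fun _ => (0:X))]
    · simp
    · intro s hs
      rw [uIcc_of_le ht.2] at hs
      have : c (t - s) = 0 := by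
        simp only [hc]
        exact max_eq_left ((min_le_right _ _).trans (by linarith [hs.1]))
      simp [this, h0]
  rw [e2, add_zero]
  refine intervalIntegral.integral_congr fun s hs => ?_
  rw [uIcc_of_le ht.1] at hs
  have : c (t - s) = t - s := by
    simp only [hc]
    rw [min_eq_right (by linarith [hs.1, ht.2]), max_eq_right (by linarith [hs.2])]
  simp [this]

theorem aux_core
    {X : Type*} [NormedAddCommGroup X] [NormedSpace ℂ X] [CompleteSpace X]
    (α : ℝ) (hα1 : 1 < α) (hα2 : α < 2)
    (A : X →ₗ.[ℂ] X)
    (S : ℝ → X →L[ℂ] X)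
    (hS : ∀ x : X, Continuous (fun t => S t x))
    (hS_eq : ∀ t : ℝ, 0 ≤ t → ∀ x y : X, (x, y) ∈ A.graph →
      S t x = x + ∫ s in (0:ℝ)..t, g α (t - s) • S s y)
    (r : ℝ) (hr : 0 < r) (f : ℝ → X) (hf : Continuous f)
    (x y : X) (u : ℝ → X) (hu : Continuous u)
    (hmild : ∀ t ∈ Icc (0:ℝ) r,
      ((∫ s in (0:ℝ)..t, g α (t - s) • u s),
        u t - x - t • y - ∫ s in (0:ℝ)..t, g α (t - s) • f s) ∈ A.graph) :
    ∀ t ∈ Icc (0:ℝ) r,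
      u t = S t x + (∫ s in (0:ℝ)..t, S s y) + ∫ s in (0:ℝ)..t, Pa α S (t - s) (f s) := by
  have hJ := aux_joint S hS
  have hgi := g_int α (by linarith)
  have hgi' := g_int (α - 1) (by linarith)
  have hgc := g_cont α hα1.le
  have hcontC : ∀ h : ℝ → X, Continuous h →
      Continuous fun t => ∫ s in (0:ℝ)..t, g α (t - s) • h s := fun h hh =>
    intervalIntegral.continuous_parametric_intervalIntegral_of_continuous
      (f := fun t s => g α (t - s) • h s)
      (by simp only [Function.uncurry_def]; fun_prop) continuous_id
  have hJh : ∀ h : ℝ → X, Continuous h → Continuous (fun p : ℝ × ℝ => S p.1 (h p.2)) :=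
    fun h hh => hJ.comp (by fun_prop : Continuous fun p : ℝ × ℝ => (p.1, h p.2))
  have hJt : ∀ h : ℝ → X, Continuous h → ∀ t, Continuous (fun s => S (t - s) (h s)) :=
    fun h hh t => hJ.comp (by fun_prop : Continuous fun s : ℝ => (t - s, h s))
  have hcontS : ∀ h : ℝ → X, Continuous h →
      Continuous fun t => ∫ s in (0:ℝ)..t, S (t - s) (h s) := fun h hh =>
    intervalIntegral.continuous_parametric_intervalIntegral_of_continuous
      (f := fun t s => S (t - s) (h s))
      (hJ.comp (by fun_prop : Continuous fun p : ℝ × ℝ => (p.1 - p.2, h p.2))) continuous_id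
  have hprim : ∀ h : ℝ → X, Continuous h → Continuous fun t => ∫ s in (0:ℝ)..t, h s :=
    fun h hh => intervalIntegral.continuous_primitive (fun a b => hh.intervalIntegrable a b) 0
  -- the data part
  set w' : ℝ → X := fun t => x + t • y + ∫ s in (0:ℝ)..t, g α (t - s) • f s with hw'
  have hw'c : Continuous w' := by
    have := hcontC f hf
    fun_prop
  -- step 1
  have key : ∀ t ∈ Icc (0:ℝ) r,
      ∫ s in (0:ℝ)..t, g α (t - s) •
        ((∫ τ in (0:ℝ)..s, u τ) - ∫ τ in (0:ℝ)..s, S (s - τ) (w' τ)) = 0 := by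
    intro t ht
    have e1 := aux_SC S hS (g α) hgi u hu t ht.1
    have e2 : ∫ s in (0:ℝ)..t, S (t - s) (∫ τ in (0:ℝ)..s, g α (s - τ) • u τ)
        = ∫ s in (0:ℝ)..t, ((∫ τ in (0:ℝ)..s, g α (s - τ) • u τ)
          + ∫ τ in (0:ℝ)..(t - s), g α (t - s - τ) • S τ (u s - w' s)) := by
      refine intervalIntegral.integral_congr fun s hs => ?_
      rw [uIcc_of_le ht.1] at hs
      have hm := hmild s ⟨hs.1, hs.2.trans ht.2⟩
      have hw : u s - x - s • y - (∫ τ in (0:ℝ)..s, g α (s - τ) • f τ) = u s - w' s := by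
        simp only [hw']; abel
      rw [hw] at hm
      exact hS_eq (t - s) (sub_nonneg.2 hs.2) _ _ hm
    have hwc : Continuous fun s => u s - w' s := hu.sub hw'c
    have c1 : Continuous fun s => ∫ τ in (0:ℝ)..(t - s), g α (t - s - τ) • S τ (u s - w' s) :=
      intervalIntegral.continuous_parametric_intervalIntegral_of_continuous
        (f := fun s τ => g α (t - s - τ) • S τ (u s - w' s))
        ((hgc.comp (by fun_prop : Continuous fun p : ℝ × ℝ => t - p.1 - p.2)).smul
          (hJ.comp (by fun_prop : Continuous fun p : ℝ × ℝ => (p.2, u p.1 - w' p.1))))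
        (by fun_prop : Continuous fun s => t - s)
    rw [intervalIntegral.integral_add ((hcontC u hu).intervalIntegrable 0 t)
      (c1.intervalIntegrable 0 t), aux_one _ hgi u hu t ht.1,
      aux_A _ hgi (fun a b => S a (u b - w' b)) (hJh _ hwc) t ht.1] at e2
    have e3 : ∀ s, ∫ τ in (0:ℝ)..s, S (s - τ) (u τ - w' τ)
        = (∫ τ in (0:ℝ)..s, S (s - τ) (u τ)) - ∫ τ in (0:ℝ)..s, S (s - τ) (w' τ) := by
      intro s
      rw [← intervalIntegral.integral_sub ((hJt u hu s).intervalIntegrable 0 s)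
        ((hJt w' hw'c s).intervalIntegrable 0 s)]
      simp only [map_sub]
    simp_rw [e3, smul_sub] at e2
    simp_rw [smul_sub]
    have i1 := aux_kint _ hgi _ (hprim u hu) t 0 t
    have i2 := aux_kint _ hgi _ (hcontS u hu) t 0 t
    have i3 := aux_kint _ hgi _ (hcontS w' hw'c) t 0 t
    rw [intervalIntegral.integral_sub i2 i3, e1] at e2
    rw [intervalIntegral.integral_sub i1 i3]
    rw [← sub_eq_zero] at e2
    rw [← neg_eq_zero, ← e2]
    abel
  have key2 := aux_cancel α hα1 hα2 r hr _ ((hprim u hu).sub (hcontS w' hw'c)) key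
  -- step 2
  set q : ℝ → X := fun t => ∫ s in (0:ℝ)..t, S (t - s) (f s) with hq
  have hqc : Continuous q := hcontS f hf
  have hPa : ∀ t, 0 ≤ t → ∫ s in (0:ℝ)..t, Pa α S (t - s) (f s)
      = ∫ s in (0:ℝ)..t, g (α - 1) (t - s) • q s := fun t ht =>
    aux_A _ hgi' (fun a b => S a (f b)) (hJh _ hf) t ht
  have hPc := aux_contOn _ hgi' q hqc (by simp [hq]) r hr
  have hSy := hprim _ (hS y)
  have hone : ∀ a b, IntervalIntegrable (fun _ : ℝ => (1:ℝ)) volume a b :=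
    fun a b => continuous_const.intervalIntegrable a b
  have fin : ∀ t ∈ Icc (0:ℝ) r, u t - (S t x + (∫ s in (0:ℝ)..t, S s y)
      + ∫ s in (0:ℝ)..t, g (α - 1) (t - s) • q s) = 0 := by
    have hc2 : ContinuousOn (fun t => (S t x + (∫ s in (0:ℝ)..t, S s y))) (Icc 0 r) :=
      ((hS x).add hSy).continuousOn
    apply aux_zero r hr _ (hu.continuousOn.sub (hc2.add hPc))
    intro t ht
    have hsub : uIcc 0 t ⊆ Icc 0 r := by
      rw [uIcc_of_le ht.1]; exact Icc_subset_Icc_right ht.2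
    have iP := (hPc.mono hsub).intervalIntegrable (μ := volume)
    have iSx := (hS x).intervalIntegrable (μ := volume) 0 t
    have iSy := hSy.intervalIntegrable (μ := volume) 0 t
    simp only [Pi.add_apply, Pi.sub_apply]
    rw [intervalIntegral.integral_sub (hu.intervalIntegrable 0 t) ((iSx.add iSy).add iP),
      intervalIntegral.integral_add (iSx.add iSy) iP, intervalIntegral.integral_add iSx iSy,
      ← aux_galpha α hα1 q hqc t ht.1]
    have hk2 := key2 t ht
    simp only [Pi.sub_apply] at hk2
    rw [← hk2]
    congr 1
    have e4 : ∫ s in (0:ℝ)..t, S (t - s) (w' s)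
        = (∫ s in (0:ℝ)..t, S (t - s) x) + (∫ s in (0:ℝ)..t, s • S (t - s) y)
          + ∫ s in (0:ℝ)..t, S (t - s) (∫ τ in (0:ℝ)..s, g α (s - τ) • f τ) := by
      have j1 := hJt (fun _ => x) continuous_const t
      have j2 := (hJt (fun _ => y) continuous_const t)
      have j2' : Continuous fun s => s • S (t - s) y := continuous_id.smul j2
      have j3 := hJt _ (hcontC f hf) t
      rw [← intervalIntegral.integral_add (j1.intervalIntegrable 0 t) (j2'.intervalIntegrable 0 t),
        ← intervalIntegral.integral_add (f := fun s => S (t - s) x + s • S (t - s) y)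
          ((j1.add j2').intervalIntegrable 0 t) (j3.intervalIntegrable 0 t)]
      congr 1
      ext s
      simp only [hw', map_add]
      rw [ContinuousLinearMap.map_smul_of_tower]
    rw [e4, aux_SC S hS _ hgi f hf t ht.1]
    congr 1
    congr 1
    · have := intervalIntegral.integral_comp_sub_left (a := 0) (b := t) (fun s => S s x) t
      simpa using this.symm
    · have e5 := aux_assoc (fun _ => 1) (fun _ => 1) hone continuous_const _ (hS y) t ht.1
      simp only [one_smul, mul_one] at e5
      rw [e5]
      have := intervalIntegral.integral_comp_sub_left (a := 0) (b := t)
        (fun s => s • S (t - s) y) t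
      simpa using this
  intro t ht
  rw [hPa t ht.1]
  exact sub_eq_zero.1 (fin t ht)

theorem stmt_8
    {X : Type*} [NormedAddCommGroup X] [NormedSpace ℂ X] [CompleteSpace X]
    (α : ℝ) (hα1 : 1 < α) (hα2 : α < 2)
    (A : X →ₗ.[ℂ] X) (hA_closed : IsClosed (A.graph : Set (X × X)))
    (hA_dense : Dense (A.domain : Set X))
    (S : ℝ → X →L[ℂ] X)
    (hS_cont : ∀ x : X, ContinuousOn (fun t => S t x) (Ici (0:ℝ)))
    (hS_zero : S 0 = 1)
    (hS_dom : ∀ t : ℝ, 0 ≤ t → ∀ x ∈ A.domain, S t x ∈ A.domain)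
    (hS_comm : ∀ t : ℝ, 0 ≤ t → ∀ x y : X, (x, y) ∈ A.graph → (S t x, S t y) ∈ A.graph)
    (hS_eq : ∀ t : ℝ, 0 ≤ t → ∀ x y : X, (x, y) ∈ A.graph →
      S t x = x + ∫ s in (0:ℝ)..t, g α (t - s) • S s y)
    (r : ℝ) (hr : 0 < r) (f : ℝ → X) (hf : ContinuousOn f (Icc 0 r))
    (x y : X) (u : ℝ → X) (hu : ContinuousOn u (Icc 0 r))
    (hmild : ∀ t ∈ Icc (0:ℝ) r,
      ((∫ s in (0:ℝ)..t, g α (t - s) • u s),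
        u t - x - t • y - ∫ s in (0:ℝ)..t, g α (t - s) • f s) ∈ A.graph) :
    ∀ t ∈ Icc (0:ℝ) r,
      u t = S t x + (∫ s in (0:ℝ)..t, S s y) + ∫ s in (0:ℝ)..t, Pa α S (t - s) (f s) := by
  have hcl : ∀ h : ℝ → X, ContinuousOn h (Icc 0 r) →
      ∃ h' : ℝ → X, Continuous h' ∧ EqOn h' h (Icc 0 r) := by
    intro h hh
    refine ⟨IccExtend hr.le ((Icc 0 r).domRestrict h), ?_, fun z hz => ?_⟩
    · exact (continuousOn_iff_continuous_domRestrict.1 hh).Icc_extend'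
    · rw [IccExtend_of_mem _ _ hz]; rfl
  obtain ⟨f', hf'c, hf'⟩ := hcl f hf
  obtain ⟨u', hu'c, hu'⟩ := hcl u hu
  set S' : ℝ → X →L[ℂ] X := fun t => S (max 0 t) with hS'
  have hS'e : ∀ t, 0 ≤ t → S' t = S t := fun t ht => by simp [hS', max_eq_right ht]
  have hS'c : ∀ x, Continuous fun t => S' t x := fun x =>
    (hS_cont x).comp_continuous (by fun_prop : Continuous fun t : ℝ => max 0 t)
      (fun t => mem_Ici.2 (le_max_left _ _))
  have hci : ∀ (F G : ℝ → X) (t : ℝ), 0 ≤ t → (∀ s ∈ Icc 0 t, F s = G s) →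
      ∫ s in (0:ℝ)..t, F s = ∫ s in (0:ℝ)..t, G s := by
    intro F G t ht h
    refine intervalIntegral.integral_congr fun s hs => ?_
    rw [uIcc_of_le ht] at hs
    exact h s hs
  have main := aux_core α hα1 hα2 A S' hS'c (by
    intro t ht x y hxy
    rw [hS'e t ht, hS_eq t ht x y hxy]
    congr 1
    apply hci _ _ t ht
    intro s hs
    rw [hS'e s hs.1]) r hr f' hf'c x y u' hu'c (by
    intro t ht
    have h1 := hmild t ht
    rw [hci (fun s => g α (t - s) • u' s) (fun s => g α (t - s) • u s) t ht.1 (fun s hs => by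
      rw [hu' ⟨hs.1, hs.2.trans ht.2⟩]),
      hci (fun s => g α (t - s) • f' s) (fun s => g α (t - s) • f s) t ht.1 (fun s hs => by
      rw [hf' ⟨hs.1, hs.2.trans ht.2⟩]), hu' ht]
    exact h1)
  intro t ht
  have h2 := main t ht
  rw [hu' ht, hS'e t ht.1] at h2
  rw [h2]
  congr 1
  · congr 1
    apply hci _ _ t ht.1
    intro s hs
    rw [hS'e s hs.1]
  · apply hci _ _ t ht.1
    intro s hs
    rw [hf' ⟨hs.1, hs.2.trans ht.2⟩]
    unfold Pa
    apply hci _ _ (t - s) (sub_nonneg.2 hs.2)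
    intro τ hτ
    rw [hS'e τ hτ.1]
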